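/- There is an absolute constant C > 0 such that for all positive integers N and m, every nonempty subset A ⊆ {1,…,N} with density σ = |A|/N, and every finite set S ⊆ 𝕋, one has ∑_{γ ∈ S} |1̂_A(γ)| ≤ C·|A|·σ^{−1/(2m)}·E_{2m}(S; 1/(2N))^{1/(2m)}. -/

import Mathlib

/-- `e(x) = e^{2πix}`. -/
noncomputable def e (x : ℝ) : ℂ := Complex.exp (2 * Real.pi * Complex.I * x)
/-- The distance from `x` to the nearest integer, i.e. the norm of the image of `x` in
`𝕋 = ℝ/ℤ`. -/
noncomputable def torusNorm (x : ℝ) : ℝ := |x - round x|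
/-- The additive energy `E_{2m}(S;δ)`: the number of `2m`-tuples `(b₁,…,b_{2m}) ∈ S^{2m}`
with `‖b₁ + ⋯ + b_m − b_{m+1} − ⋯ − b_{2m}‖ ≤ δ` in `𝕋 = ℝ/ℤ`. -/
noncomputable def energy (m : ℕ) (S : Finset ℝ) (δ : ℝ) : ℕ := by
  classical
  exact ((Fintype.piFinset fun _ : Fin (2 * m) => S).filter
    (fun b => torusNorm (∑ i : Fin (2 * m), if (i : ℕ) < m then b i else -b i) ≤ δ)).card

/-!
Choosing phases `c_γ`, one has `∑_{γ ∈ S} ‖1̂_A(γ)‖ = ∑_{n ∈ A} F(n)` with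
`F(n) = ∑_{γ ∈ S} c_γ e(nγ)`, and Hölder's inequality bounds the `2m`-th power of this by
`|A|^(2m-1) ∑_{n ∈ A} ‖F(n)‖^(2m)`. Now `F(n)^m` is an exponential sum `∑ a_b e(nβ_b)` over
`b ∈ S^m` with frequencies `β_b = b₁ + ⋯ + b_m`, whose second moment is bounded by a large sieve
argument: the coefficient at `n` of the step function `∑ a_b 1_{B(β_b, r)}`, `r = 1/(6N)`, is
`∑ a_b e(nβ_b)` times the integral of `e(nx)` over `B(0, r)`, and for `|n| ≤ N` that integral is at
least half the measure of the ball, because `Re e(nx) ≥ 1/2` there. By Bessel's inequality the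
second moment is thus controlled by the `L²` norm of the step function, to which only the pairs of
overlapping balls, hence `‖β_b - β_c‖ ≤ 2r ≤ 1/(2N)`, contribute.
-/

open AddCircle ComplexConjugate Finset MeasureTheory Metric

section ClosePairs

variable {ι X : Type*} [PseudoMetricSpace X]

open Classical in
/-- The pairs of indices in `s` whose points `β i`, `β j` are within distance `δ` of each other. For
`β` the `m`-fold sums of a set of frequencies, their number is the additive energy of that set. -/
noncomputable def closePairs (s : Finset ι) (β : ι → X) (δ : ℝ) : Finset (ι × ι) :=
  {p ∈ s ×ˢ s | dist (β p.1) (β p.2) ≤ δ}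

lemma mem_closePairs {s : Finset ι} {β : ι → X} {δ : ℝ} {p : ι × ι} :
    p ∈ closePairs s β δ ↔ (p.1 ∈ s ∧ p.2 ∈ s) ∧ dist (β p.1) (β p.2) ≤ δ := by
  simp [closePairs]

lemma closePairs_mono (s : Finset ι) (β : ι → X) {δ ε : ℝ} (h : δ ≤ ε) :
    closePairs s β δ ⊆ closePairs s β ε := fun _ hp ↦
  mem_closePairs.2 ⟨(mem_closePairs.1 hp).1, (mem_closePairs.1 hp).2.trans h⟩

end ClosePairs

lemma exists_norm_eq_one_sum_norm_sum_le {𝕜 ι κ : Type*} [RCLike 𝕜] (A : Finset κ) (s : Finset ι)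
    (K : κ → ι → 𝕜) :
    ∃ c : ι → 𝕜, (∀ i, ‖c i‖ = 1) ∧
      ∑ i ∈ s, ‖∑ n ∈ A, K n i‖ ≤ ∑ n ∈ A, ‖∑ i ∈ s, c i * K n i‖ := by
  choose c hc hphase using fun i ↦ RCLike.exists_norm_eq_mul_self (∑ n ∈ A, K n i)
  refine ⟨c, hc, ?_⟩
  have hsum : ((∑ i ∈ s, ‖∑ n ∈ A, K n i‖ : ℝ) : 𝕜) = ∑ n ∈ A, ∑ i ∈ s, c i * K n i := by
    rw [sum_comm]
    push_cast
    simp_rw [hphase, mul_sum]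
  calc ∑ i ∈ s, ‖∑ n ∈ A, K n i‖ = ‖((∑ i ∈ s, ‖∑ n ∈ A, K n i‖ : ℝ) : 𝕜)‖ :=
        (RCLike.norm_of_nonneg (by positivity)).symm
    _ ≤ _ := hsum ▸ norm_sum_le _ _

lemma measureReal_closedBall_eq {G : Type*} [SeminormedAddCommGroup G] [MeasurableSpace G]
    [MeasurableAdd G] (μ : Measure G) [μ.IsAddLeftInvariant] (b : G) (r : ℝ) :
    μ.real (closedBall b r) = μ.real (closedBall 0 r) := by
  rw [measureReal_def, ← measure_preimage_add μ b, preimage_add_closedBall, sub_self,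
    measureReal_def]

section Circle

variable {T : ℝ}

lemma fourier_apply_add (n : ℤ) (x y : AddCircle T) :
    fourier n (x + y) = fourier n x * fourier n y := by
  simp [fourier_apply, toCircle_add]

lemma fourier_apply_sum {ι : Type*} (n : ℤ) (s : Finset ι) (x : ι → AddCircle T) :
    fourier n (∑ i ∈ s, x i) = ∏ i ∈ s, fourier n (x i) := by
  classical
  induction s using Finset.induction_on with
  | empty => simp
  | insert i s hi ih => rw [sum_insert hi, prod_insert hi, fourier_apply_add, ih]

lemma sum_mul_fourier_pow {ι : Type*} (s : Finset ι) (c : ι → ℂ) (θ : ι → AddCircle T) (n : ℤ)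
    (m : ℕ) :
    (∑ i ∈ s, c i * fourier n (θ i)) ^ m =
      ∑ b ∈ Fintype.piFinset fun _ : Fin m ↦ s, (∏ k, c (b k)) * fourier n (∑ k, θ (b k)) := by
  simp_rw [sum_pow', prod_mul_distrib, fourier_apply_sum]

lemma re_fourier_eq_cos_norm (n : ℤ) (u : AddCircle T) :
    (fourier n u).re = Real.cos (2 * Real.pi * n * ‖u‖ / T) := by
  obtain ⟨y, rfl, hy⟩ : ∃ y : ℝ, (y : AddCircle T) = u ∧ ‖u‖ = |y| := by
    obtain ⟨x, rfl⟩ := QuotientAddGroup.mk_surjective u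
    refine ⟨x - round (T⁻¹ * x) * T, ?_, AddCircle.norm_eq T⟩
    simp [← zsmul_eq_mul, AddCircle.coe_period]
  have hexp : fourier n (y : AddCircle T) =
      Complex.exp ((2 * Real.pi * n * y / T : ℝ) * Complex.I) := by
    rw [fourier_coe_apply]
    push_cast
    ring_nf
  rw [hexp, Complex.exp_ofReal_mul_I_re, hy]
  rcases abs_choice y with h | h <;> rw [h]
  rw [mul_neg, neg_div, Real.cos_neg]

variable [hT : Fact (0 < T)]

lemma half_le_re_fourier {n : ℤ} {u : AddCircle T} (h : |(n : ℝ)| * ‖u‖ ≤ T / 6) :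
    1 / 2 ≤ (fourier n u).re := by
  have hT0 : 0 < T := hT.out
  have hangle : |2 * Real.pi * n * ‖u‖ / T| ≤ Real.pi / 3 := by
    calc |2 * Real.pi * n * ‖u‖ / T| = 2 * Real.pi / T * (|(n : ℝ)| * ‖u‖) := by
          simp only [abs_div, abs_mul, abs_norm, abs_of_pos hT0, abs_of_pos Real.pi_pos, abs_two]
          ring
      _ ≤ 2 * Real.pi / T * (T / 6) := by gcongr
      _ = Real.pi / 3 := by field_simp; norm_num
  rw [re_fourier_eq_cos_norm, ← Real.cos_pi_div_three, ← Real.cos_abs (_ / T)]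
  exact Real.cos_le_cos_of_nonneg_of_le_pi (abs_nonneg _) (by linarith [Real.pi_pos]) hangle

lemma setIntegral_closedBall_fourier (n : ℤ) (b : AddCircle T) (r : ℝ) :
    ∫ x in closedBall b r, fourier n x ∂haarAddCircle =
      fourier n b * ∫ x in closedBall (0 : AddCircle T) r, fourier n x ∂haarAddCircle := by
  rw [← (measurePreserving_add_left haarAddCircle b).setIntegral_preimage_emb
    (measurableEmbedding_addLeft b), preimage_add_closedBall, sub_self, ← integral_const_mul]
  simp_rw [fourier_apply_add]

lemma half_measureReal_le_norm_setIntegral_fourier {n : ℤ} {r : ℝ} (h : |(n : ℝ)| * r ≤ T / 6) :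
    haarAddCircle.real (closedBall (0 : AddCircle T) r) / 2 ≤
      ‖∫ x in closedBall (0 : AddCircle T) r, fourier n x ∂haarAddCircle‖ := by
  have hint : IntegrableOn (fourier n) (closedBall (0 : AddCircle T) r) haarAddCircle :=
    (map_continuous (fourier n)).continuousOn.integrableOn_compact (isCompact_closedBall _ _)
  calc haarAddCircle.real (closedBall (0 : AddCircle T) r) / 2
      = ∫ _ in closedBall (0 : AddCircle T) r, (1 / 2 : ℝ) ∂haarAddCircle := by
        rw [setIntegral_const, smul_eq_mul, mul_one_div]
    _ ≤ ∫ x in closedBall (0 : AddCircle T) r, (fourier n x).re ∂haarAddCircle := by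
        refine setIntegral_mono_on (by simp) hint.re measurableSet_closedBall fun x hx ↦ ?_
        refine half_le_re_fourier (le_trans ?_ h)
        gcongr
        simpa using hx
    _ = (∫ x in closedBall (0 : AddCircle T) r, fourier n x ∂haarAddCircle).re := integral_re hint
    _ ≤ _ := Complex.re_le_norm _

/-- The indicator function of the closed ball `B(b, r)`, as an element of `L²`: a smoothed point
mass at `b`, to which Bessel's inequality applies. -/
noncomputable def ballLp (b : AddCircle T) (r : ℝ) : Lp ℂ 2 (haarAddCircle (T := T)) :=
  indicatorConstLp 2 (measurableSet_closedBall (x := b) (ε := r)) (measure_ne_top _ _) 1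

lemma inner_ballLp_ballLp (b c : AddCircle T) (r : ℝ) :
    inner ℂ (ballLp b r) (ballLp c r) = haarAddCircle.real (closedBall b r ∩ closedBall c r) :=
  L2.inner_indicatorConstLp_one_indicatorConstLp_one _ _

lemma inner_ballLp_fourierLp (b : AddCircle T) (r : ℝ) (n : ℤ) :
    inner ℂ (ballLp b r) (fourierLp 2 n) =
      fourier n b * ∫ x in closedBall (0 : AddCircle T) r, fourier n x ∂haarAddCircle := by
  rw [ballLp, L2.inner_indicatorConstLp_one, ← setIntegral_closedBall_fourier]
  exact integral_congr_ae (ae_restrict_of_ae (coeFn_fourierLp 2 n))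

lemma norm_inner_ballLp_ballLp_le (b c : AddCircle T) (r : ℝ) :
    ‖inner ℂ (ballLp b r) (ballLp c r)‖ ≤ haarAddCircle.real (closedBall (0 : AddCircle T) r) := by
  rw [inner_ballLp_ballLp, Complex.norm_of_nonneg measureReal_nonneg,
    ← measureReal_closedBall_eq haarAddCircle b]
  exact measureReal_mono Set.inter_subset_left

lemma inner_ballLp_ballLp_eq_zero {b c : AddCircle T} {r : ℝ} (h : 2 * r < dist b c) :
    inner ℂ (ballLp b r) (ballLp c r) = 0 := by
  rw [inner_ballLp_ballLp, (closedBall_disjoint_closedBall (by linarith)).inter_eq]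
  simp

variable {ι : Type*}

lemma norm_sum_smul_ballLp_sq_le (s : Finset ι) (a : ι → ℂ) (β : ι → AddCircle T) (r : ℝ) :
    ‖∑ i ∈ s, a i • ballLp (β i) r‖ ^ 2 ≤
      haarAddCircle.real (closedBall (0 : AddCircle T) r) *
        ∑ p ∈ closePairs s β (2 * r), ‖a p.1‖ * ‖a p.2‖ := by
  have hinner : inner ℂ (∑ i ∈ s, a i • ballLp (β i) r) (∑ i ∈ s, a i • ballLp (β i) r) =
      ∑ p ∈ s ×ˢ s, conj (a p.1) * (a p.2 * inner ℂ (ballLp (β p.1) r) (ballLp (β p.2) r)) := by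
    simp_rw [sum_inner, inner_sum, inner_smul_left, inner_smul_right, sum_product]
  have hnorm : ‖∑ i ∈ s, a i • ballLp (β i) r‖ ^ 2 =
      ‖inner ℂ (∑ i ∈ s, a i • ballLp (β i) r) (∑ i ∈ s, a i • ballLp (β i) r)‖ := by
    simp [inner_self_eq_norm_sq_to_K]
  have hclose : closePairs s β (2 * r) ⊆ s ×ˢ s := fun p hp ↦
    mem_product.2 (mem_closePairs.1 hp).1
  rw [hnorm, hinner, ← sum_subset hclose, mul_sum]
  · refine norm_sum_le_of_le _ fun p _ ↦ ?_
    rw [norm_mul, norm_mul, RCLike.norm_conj, ← mul_assoc, mul_comm]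
    gcongr
    exact norm_inner_ballLp_ballLp_le _ _ _
  · intro p hp hfar
    have hdist : 2 * r < dist (β p.1) (β p.2) :=
      not_le.1 fun h ↦ hfar (mem_closePairs.2 ⟨mem_product.1 hp, h⟩)
    rw [inner_ballLp_ballLp_eq_zero hdist, mul_zero, mul_zero]

variable {A : Finset ℤ} {r : ℝ}

theorem measureReal_mul_sum_norm_sum_fourier_sq_le (hA : ∀ n ∈ A, |(n : ℝ)| * r ≤ T / 6)
    (s : Finset ι) (a : ι → ℂ) (β : ι → AddCircle T) :
    haarAddCircle.real (closedBall (0 : AddCircle T) r) *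
        ∑ n ∈ A, ‖∑ i ∈ s, a i * fourier n (β i)‖ ^ 2 ≤
      4 * ∑ p ∈ closePairs s β (2 * r), ‖a p.1‖ * ‖a p.2‖ := by
  set μ := haarAddCircle.real (closedBall (0 : AddCircle T) r)
  set G := ∑ i ∈ s, conj (a i) • ballLp (β i) r
  have hcoeff (n : ℤ) : inner ℂ G (fourierLp 2 n) =
      (∑ i ∈ s, a i * fourier n (β i)) *
        ∫ x in closedBall (0 : AddCircle T) r, fourier n x ∂haarAddCircle := by
    simp_rw [G, sum_inner, inner_smul_left, inner_ballLp_fourierLp, RCLike.conj_conj, sum_mul,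
      mul_assoc]
  have hlower (n : ℤ) (hn : n ∈ A) : (μ / 2) ^ 2 * ‖∑ i ∈ s, a i * fourier n (β i)‖ ^ 2 ≤
      ‖inner ℂ (fourierLp 2 n) G‖ ^ 2 := by
    rw [norm_inner_symm, hcoeff, norm_mul, ← mul_pow, mul_comm]
    gcongr
    exact half_measureReal_le_norm_setIntegral_fourier (hA n hn)
  have hbessel : (μ / 2) ^ 2 * ∑ n ∈ A, ‖∑ i ∈ s, a i * fourier n (β i)‖ ^ 2 ≤
      μ * ∑ p ∈ closePairs s β (2 * r), ‖a p.1‖ * ‖a p.2‖ := by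
    calc _ ≤ ∑ n ∈ A, ‖inner ℂ (fourierLp 2 n) G‖ ^ 2 := by
          rw [mul_sum]
          exact sum_le_sum hlower
      _ ≤ ‖G‖ ^ 2 := orthonormal_fourier.sum_inner_products_le G
      _ ≤ _ := by simpa only [RCLike.norm_conj] using
          norm_sum_smul_ballLp_sq_le s (fun i ↦ conj (a i)) β r
  have hμ₀ : 0 ≤ μ := measureReal_nonneg
  rcases hμ₀.eq_or_lt with hμ | hμ
  · rw [← hμ, zero_mul]
    positivity
  · refine le_of_mul_le_mul_left ?_ hμ
    linarith

theorem measureReal_mul_sum_norm_sum_fourier_pow_le (hA : ∀ n ∈ A, |(n : ℝ)| * r ≤ T / 6)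
    (s : Finset ι) {c : ι → ℂ} (hc : ∀ i ∈ s, ‖c i‖ ≤ 1) (θ : ι → AddCircle T) (m : ℕ) :
    haarAddCircle.real (closedBall (0 : AddCircle T) r) *
        ∑ n ∈ A, ‖∑ i ∈ s, c i * fourier n (θ i)‖ ^ (2 * m) ≤
      4 * #(closePairs (Fintype.piFinset fun _ : Fin m ↦ s) (fun b ↦ ∑ k, θ (b k)) (2 * r)) := by
  have hprod {b : Fin m → ι} (hb : b ∈ Fintype.piFinset fun _ : Fin m ↦ s) :
      ‖∏ k, c (b k)‖ ≤ 1 := by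
    rw [norm_prod]
    exact prod_le_one (fun _ _ ↦ norm_nonneg _) fun k _ ↦ hc _ (Fintype.mem_piFinset.1 hb k)
  have hpow (n : ℤ) : ‖∑ i ∈ s, c i * fourier n (θ i)‖ ^ (2 * m) =
      ‖∑ b ∈ Fintype.piFinset fun _ : Fin m ↦ s,
        (∏ k, c (b k)) * fourier n (∑ k, θ (b k))‖ ^ 2 := by
    rw [mul_comm, pow_mul, ← norm_pow, sum_mul_fourier_pow]
  simp_rw [hpow]
  refine (measureReal_mul_sum_norm_sum_fourier_sq_le hA _ _ _).trans ?_
  gcongr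
  rw [card_eq_sum_ones, Nat.cast_sum, Nat.cast_one]
  refine sum_le_sum fun p hp ↦ ?_
  obtain ⟨⟨hp₁, hp₂⟩, -⟩ := mem_closePairs.1 hp
  exact mul_le_one₀ (hprod hp₁) (norm_nonneg _) (hprod hp₂)

theorem measureReal_mul_pow_sum_norm_sum_fourier_le
    (hA : ∀ n ∈ A, |(n : ℝ)| * r ≤ T / 6) (s : Finset ι) (θ : ι → AddCircle T) {m : ℕ}
    (hm : m ≠ 0) :
    haarAddCircle.real (closedBall (0 : AddCircle T) r) *
        (∑ i ∈ s, ‖∑ n ∈ A, fourier n (θ i)‖) ^ (2 * m) ≤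
      (#A : ℝ) ^ (2 * m - 1) * (4 *
        #(closePairs (Fintype.piFinset fun _ : Fin m ↦ s) (fun b ↦ ∑ k, θ (b k)) (2 * r))) := by
  obtain ⟨c, hc, hdual⟩ := exists_norm_eq_one_sum_norm_sum_le A s fun n i ↦ fourier n (θ i)
  have hholder : (∑ i ∈ s, ‖∑ n ∈ A, fourier n (θ i)‖) ^ (2 * m) ≤
      (#A : ℝ) ^ (2 * m - 1) * ∑ n ∈ A, ‖∑ i ∈ s, c i * fourier n (θ i)‖ ^ (2 * m) := by
    refine (pow_le_pow_left₀ (by positivity) hdual _).trans ?_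
    have hpow := pow_sum_le_card_mul_sum_pow (s := A)
      (f := fun n ↦ ‖∑ i ∈ s, c i * fourier n (θ i)‖) (fun _ _ ↦ norm_nonneg _) (2 * m - 1)
    rwa [Nat.sub_add_cancel (by lia)] at hpow
  refine (mul_le_mul_of_nonneg_left hholder measureReal_nonneg).trans ?_
  rw [mul_left_comm]
  exact mul_le_mul_of_nonneg_left
    (measureReal_mul_sum_norm_sum_fourier_pow_le hA s (fun i _ ↦ (hc i).le) θ m) (by positivity)

end Circle

lemma haarAddCircle_real_closedBall_unit (x : UnitAddCircle) {r : ℝ} (h₀ : 0 ≤ r)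
    (h : 2 * r ≤ 1) : haarAddCircle.real (closedBall x r) = 2 * r := by
  have hvol := AddCircle.volume_closedBall (T := 1) (x := x) r
  rw [volume_eq_smul_haarAddCircle, ENNReal.ofReal_one, one_smul, min_eq_right h] at hvol
  rw [measureReal_def, hvol, ENNReal.toReal_ofReal (by positivity)]

lemma e_intCast_mul (n : ℤ) (γ : ℝ) : e (n * γ) = fourier n (γ : UnitAddCircle) := by
  rw [e, fourier_coe_apply]
  push_cast
  ring_nf

lemma torusNorm_sub (x y : ℝ) : torusNorm (x - y) = dist (x : UnitAddCircle) y := by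
  rw [dist_eq_norm, ← AddCircle.coe_sub, UnitAddCircle.norm_eq, torusNorm]

lemma energy_eq_card_closePairs (m : ℕ) (S : Finset ℝ) (δ : ℝ) :
    energy m S δ = #(closePairs (Fintype.piFinset fun _ : Fin m ↦ S)
      (fun b ↦ ∑ k, (b k : UnitAddCircle)) δ) := by
  classical
  let φ : (Fin m → ℝ) × (Fin m → ℝ) ≃ (Fin (2 * m) → ℝ) :=
    (Fin.appendEquiv m m).trans ((finCongr (two_mul m).symm).arrowCongr (Equiv.refl ℝ))
  have hmem (p) : φ p ∈ Fintype.piFinset (fun _ : Fin (2 * m) ↦ S) ↔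
      p.1 ∈ Fintype.piFinset (fun _ : Fin m ↦ S) ∧ p.2 ∈ Fintype.piFinset (fun _ : Fin m ↦ S) := by
    simp only [Fintype.mem_piFinset]
    rw [← (finCongr (two_mul m).symm).forall_congr_right, Fin.forall_fin_add]
    simp [φ, Fin.appendEquiv, -Fin.natAdd_eq_addNat]
  have hsum (p) : (∑ i : Fin (2 * m), if (i : ℕ) < m then φ p i else -φ p i) =
      ∑ k, p.1 k - ∑ k, p.2 k := by
    rw [← (finCongr (two_mul m).symm).sum_comp, Fin.sum_univ_add]
    simp [φ, Fin.appendEquiv, sub_eq_add_neg, -Fin.natAdd_eq_addNat]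
  have hcoe (b : Fin m → ℝ) : ((∑ k, b k : ℝ) : UnitAddCircle) = ∑ k, (b k : UnitAddCircle) :=
    map_sum (QuotientAddGroup.mk' _) b univ
  refine (card_equiv φ fun p ↦ ?_).symm
  rw [mem_closePairs, mem_filter, hmem, hsum, torusNorm_sub, hcoe, hcoe]

theorem pow_sum_norm_sum_e_le {N m : ℕ} (hN : N ≠ 0) (hm : m ≠ 0) {A : Finset ℤ}
    (hA : ∀ n ∈ A, |n| ≤ N) (S : Finset ℝ) :
    (∑ γ ∈ S, ‖∑ n ∈ A, e (n * γ)‖) ^ (2 * m) ≤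
      (#A : ℝ) ^ (2 * m - 1) * (12 * N * energy m S (1 / (2 * N))) := by
  have hN₁ : (1 : ℝ) ≤ N := by exact_mod_cast Nat.one_le_iff_ne_zero.2 hN
  have hr : ∀ n ∈ A, |(n : ℝ)| * (1 / (6 * N)) ≤ 1 / 6 := fun n hn ↦ by
    have hn' : |(n : ℝ)| ≤ N := by exact_mod_cast hA n hn
    calc |(n : ℝ)| * (1 / (6 * N)) ≤ N * (1 / (6 * N)) := by gcongr
      _ = 1 / 6 := by field_simp
  have hball : haarAddCircle.real (closedBall (0 : UnitAddCircle) (1 / (6 * N))) = 1 / (3 * N) := by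
    rw [haarAddCircle_real_closedBall_unit _ (by positivity)]
    · field_simp; norm_num
    · rw [mul_one_div, div_le_one (by positivity)]; linarith
  have hscale : 2 * (1 / (6 * N) : ℝ) ≤ 1 / (2 * N) := by
    rw [mul_one_div, div_le_div_iff₀ (by positivity) (by positivity)]
    linarith
  have hmoment := measureReal_mul_pow_sum_norm_sum_fourier_le hr S
    (fun γ ↦ (γ : UnitAddCircle)) hm
  rw [hball, one_div_mul_eq_div, div_le_iff₀ (by positivity)] at hmoment
  simp_rw [e_intCast_mul, energy_eq_card_closePairs]
  calc _ ≤ _ := hmoment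
    _ ≤ (#A : ℝ) ^ (2 * m - 1) * (4 * #(closePairs (Fintype.piFinset fun _ : Fin m ↦ S)
          (fun b ↦ ∑ k, (b k : UnitAddCircle)) (1 / (2 * N)))) * (3 * N) := by
        gcongr
        exact closePairs_mono _ _ hscale
    _ = _ := by ring

lemma le_mul_rpow_mul_rpow_of_pow_le {k : ℕ} (hk : k ≠ 0) {X a N E K : ℝ} (ha : 0 < a)
    (hN : 0 < N) (hE : 0 ≤ E) (hK : 1 ≤ K) (h : X ^ k ≤ a ^ (k - 1) * (K * N * E)) :
    X ≤ K * a * (a / N) ^ (-1 / k : ℝ) * E ^ (1 / k : ℝ) := by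
  refine le_of_pow_le_pow_left₀ hk (by positivity) (h.trans ?_)
  have hdensity : ((a / N) ^ (-1 / k : ℝ)) ^ k = N / a := by
    rw [← Real.rpow_mul_natCast (by positivity), div_mul_cancel₀ _ (by exact_mod_cast hk),
      Real.rpow_neg_one, inv_div]
  have henergy : (E ^ (1 / k : ℝ)) ^ k = E := by
    rw [one_div, Real.rpow_inv_natCast_pow hE hk]
  rw [mul_pow, mul_pow, mul_pow, hdensity, henergy]
  calc a ^ (k - 1) * (K * N * E) = K * a ^ k * (N / a) * E := by
        rw [← pow_sub_one_mul hk a]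
        field_simp
    _ ≤ K ^ k * a ^ k * (N / a) * E := by
        gcongr
        exact le_self_pow₀ hK hk

/-- Lemma 6.1 (Bloom–Maynard, Lemma 7): for any finite set `S` of frequencies on the torus,
`∑_{γ ∈ S} |1̂_A(γ)| ≪ |A|·σ^{-1/2m}·E_{2m}(S;1/2N)^{1/2m}`. -/
theorem stmt17 :
    ∃ C : ℝ, 0 < C ∧
      ∀ N m : ℕ, 0 < N → 0 < m → ∀ A : Finset ℕ, A.Nonempty → A ⊆ Finset.Icc 1 N →
        ∀ S : Finset ℝ,
          (∑ γ ∈ S, ‖∑ n ∈ A, e ((n : ℝ) * γ)‖) ≤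
            C * A.card * ((A.card : ℝ) / N) ^ (-(1 : ℝ) / (2 * m)) *
              (energy m S (1 / (2 * N)) : ℝ) ^ ((1 : ℝ) / (2 * m)) := by
  refine ⟨12, by norm_num, fun N m hN hm A hA hAN S ↦ ?_⟩
  have hAint : ∀ n ∈ A.map Nat.castEmbedding, |n| ≤ (N : ℤ) := by
    simpa using fun n hn ↦ (mem_Icc.1 (hAN hn)).2
  have hpow := pow_sum_norm_sum_e_le hN.ne' hm.ne' hAint S
  simp only [sum_map, card_map, Nat.castEmbedding_apply, Int.cast_natCast] at hpow
  have hroot := le_mul_rpow_mul_rpow_of_pow_le (mul_ne_zero two_ne_zero hm.ne')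
    (Nat.cast_pos.2 hA.card_pos) (Nat.cast_pos.2 hN) (Nat.cast_nonneg _) (by norm_num) hpow
  exact_mod_cast hroot
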